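/- Let F be an algebraically closed field and fix n ≥ 1. Let I be the ideal of R = MvPolynomial ((Fin n × Fin n) ⊕ (Fin n × Fin n)) F generated by the n² entries of the commutator X*Y − Y*X of the two generic n×n matrices X and Y. If the radical of I is a prime ideal (i.e. the variety of commuting pairs of n×n matrices is irreducible), then for all commuting n×n matrices A and B over F, the F-vector space dimension of the unital subalgebra generated by A and B is at most n. -/

import Mathlib

/-!
If `√I` is prime, the coordinate ring `S` of the commuting variety is a domain, and the generic
commuting pair `(X, Y)` lives over `S`. It specializes to `(N, 0)` with `N` the nilpotent shift,
which has a cyclic vector, so `X` has one generically. A matrix commuting with `X` is determined by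
its value on that vector, so any `n + 1` matrices commuting with `X` are linearly dependent over
`S`. Linear independence after a specialization `S → F` is witnessed by a determinant that is
already nonzero in `S`; hence the specializations of the matrices commuting with `X`, among which
are all elements of `F[A, B]`, span a space of dimension at most `n`.
-/

open scoped Matrix

/-- The Krylov matrix of a square matrix `A` and a vector `v`, with columns
`v, A v, …, A ^ (n - 1) v`. Over a field, its nonsingularity says that `v` is a cyclic vector
of `A`. -/
def krylovMatrix {R : Type*} [Semiring R] {n : ℕ} (A : Matrix (Fin n) (Fin n) R) (v : Fin n → R) :
    Matrix (Fin n) (Fin n) R :=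
  .of fun i k => (A ^ (k : ℕ) *ᵥ v) i

section Krylov

variable {n : ℕ}

theorem krylovMatrix_map {R S : Type*} [Semiring R] [Semiring S] (f : R →+* S)
    (A : Matrix (Fin n) (Fin n) R) (v : Fin n → R) :
    krylovMatrix (A.map f) (f ∘ v) = (krylovMatrix A v).map f := by
  ext i k
  simp only [krylovMatrix, Matrix.of_apply, Matrix.map_apply, RingHom.map_mulVec, Matrix.map_pow]

theorem mul_krylovMatrix_of_commute {R : Type*} [Semiring R] {A C : Matrix (Fin n) (Fin n) R}
    (hC : Commute C A) (v : Fin n → R) : C * krylovMatrix A v = krylovMatrix A (C *ᵥ v) := by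
  ext i k
  calc (C * krylovMatrix A v) i k = (C *ᵥ (A ^ (k : ℕ) *ᵥ v)) i := rfl
    _ = (A ^ (k : ℕ) *ᵥ (C *ᵥ v)) i := by
      rw [Matrix.mulVec_mulVec, (hC.pow_right k).eq, ← Matrix.mulVec_mulVec]

theorem exists_krylovMatrix_eq_one (R : Type*) [Semiring R] (n : ℕ) :
    ∃ (A : Matrix (Fin n) (Fin n) R) (v : Fin n → R), krylovMatrix A v = 1 := by
  let N : Matrix (Fin n) (Fin n) R := .of fun i j => if (i : ℕ) = j + 1 then 1 else 0
  let e (k : ℕ) : Fin n → R := fun i => if (i : ℕ) = k then 1 else 0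
  have shift (k : ℕ) (hk : k < n) : N *ᵥ e k = e (k + 1) := by
    ext i
    have eq_iff (j : Fin n) : (j : ℕ) = k ↔ j = ⟨k, hk⟩ := by simp [Fin.ext_iff]
    simp [N, e, Matrix.mulVec, dotProduct, eq_iff]
  have pow_shift (k : ℕ) (hk : k ≤ n) : N ^ k *ᵥ e 0 = e k := by
    induction k with
    | zero => simp
    | succ k ih => rw [pow_succ', ← Matrix.mulVec_mulVec, ih (by omega), shift k hk]
  refine ⟨N, e 0, ?_⟩
  ext i k
  simp [krylovMatrix, pow_shift k k.2.le, e, Matrix.one_apply, Fin.ext_iff]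

variable {R : Type*} [CommSemiring R] [IsCancelAdd R] {A : Matrix (Fin n) (Fin n) R} {v : Fin n → R}

theorem eq_of_commute_of_mulVec_eq (hA : (krylovMatrix A v).Nonsingular)
    {C D : Matrix (Fin n) (Fin n) R} (hC : Commute C A) (hD : Commute D A)
    (h : C *ᵥ v = D *ᵥ v) : C = D :=
  Matrix.isRightRegular_iff_nonsingular.2 hA <| show C * krylovMatrix A v = D * krylovMatrix A v by
    rw [mul_krylovMatrix_of_commute hC, mul_krylovMatrix_of_commute hD, h]

theorem card_le_of_linearIndependent_of_commute [Nontrivial R] {κ : Type*} [Fintype κ]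
    (hA : (krylovMatrix A v).Nonsingular) {C : κ → Matrix (Fin n) (Fin n) R}
    (hC : ∀ k, Commute (C k) A) (hli : LinearIndependent R C) : Fintype.card κ ≤ n := by
  have hspan {D} (hD : D ∈ Submodule.span R (Set.range C)) : Commute D A := by
    induction hD using Submodule.span_induction with
    | mem _ h => obtain ⟨k, rfl⟩ := h; exact hC k
    | zero => exact Commute.zero_left A
    | add _ _ _ _ h₁ h₂ => exact h₁.add_left h₂
    | smul a _ _ h => exact h.smul_left a
  have hliv : LinearIndependent R fun k => C k *ᵥ v :=
    hli.map_injOn ((Matrix.mulVecBilin R R).flip v) fun _ hD _ hE h =>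
      eq_of_commute_of_mulVec_eq hA (hspan hD) (hspan hE) h
  simpa using hliv.fintype_card_le_finrank

end Krylov

section Specialization

theorem nonsingular_of_nonsingular_map {S T κ : Type*} [CommRing S] [IsDomain S] [CommRing T]
    [Nontrivial T] [Fintype κ] [DecidableEq κ] (φ : S →+* T) {M : Matrix κ κ S}
    (hM : (M.map φ).Nonsingular) : M.Nonsingular := by
  rw [Matrix.nonsingular_iff_det_mem_nonZeroDivisors, ← φ.mapMatrix_apply, ← φ.map_det] at hM
  exact Matrix.nonsingular_iff_det_ne_zero.2 (ne_zero_of_map (nonZeroDivisors.ne_zero hM))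

variable {S K κ : Type*} [CommRing S] [IsDomain S] [Field K] [Finite κ]

theorem linearIndependent_of_ringHom_comp {ι : Type*} [Finite ι] {φ : S →+* K}
    (hφ : Function.Surjective φ) {v : κ → ι → S} (h : LinearIndependent K fun k => φ ∘ v k) :
    LinearIndependent S v := by
  classical
  have := Fintype.ofFinite ι
  have := Fintype.ofFinite κ
  let M : Matrix ι κ S := .of fun i k => v k i
  obtain ⟨g, hg⟩ := LinearMap.exists_leftInverse_of_injective (Matrix.toLin' (M.map φ))
    (LinearMap.ker_eq_bot.2 (Matrix.mulVec_injective_iff.2 h))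
  obtain ⟨L, hL⟩ : ∃ L : Matrix κ ι S, L.map φ = LinearMap.toMatrix' g :=
    ⟨(LinearMap.toMatrix' g).map (Function.surjInv hφ),
      Matrix.ext fun _ _ => Function.surjInv_eq hφ _⟩
  have hLM : (L * M).map φ = 1 := by
    rw [Matrix.map_mul, hL, ← LinearMap.toMatrix'_toLin' (M.map φ), ← LinearMap.toMatrix'_comp, hg,
      LinearMap.toMatrix'_id]
  have hns : (L * M).Nonsingular :=
    nonsingular_of_nonsingular_map φ (hLM ▸ Matrix.nonsingular_one)
  have hinj : Function.Injective (L.mulVec ∘ M.mulVec) := by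
    simpa only [Function.comp_def, Matrix.mulVec_mulVec] using
      Matrix.mulVec_injective_iff.2 hns.linearIndependent_col
  exact Matrix.mulVec_injective_iff.1 hinj.of_comp

theorem linearIndependent_of_matrix_map {ι ι' : Type*} [Finite ι] [Finite ι'] {φ : S →+* K}
    (hφ : Function.Surjective φ) {C : κ → Matrix ι ι' S}
    (h : LinearIndependent K fun k => (C k).map φ) : LinearIndependent S C :=
  .of_comp (LinearEquiv.curry S S ι ι').symm.toLinearMap <| linearIndependent_of_ringHom_comp hφ <|
    h.map' (LinearEquiv.curry K K ι ι').symm.toLinearMap (LinearEquiv.ker _)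

theorem finrank_map_centralizer_le [Algebra K S] (φ : S →ₐ[K] K) {n : ℕ}
    {A : Matrix (Fin n) (Fin n) S} {v : Fin n → S} (hA : (krylovMatrix A v).Nonsingular) :
    Module.finrank K ((Subalgebra.centralizer K {A}).map φ.mapMatrix) ≤ n := by
  have hφ : Function.Surjective φ := fun x => ⟨algebraMap K S x, φ.commutes x⟩
  by_contra! hlt
  obtain ⟨f, hf⟩ := exists_linearIndependent_of_le_finrank (Nat.succ_le_of_lt hlt)
  choose C hCA hC using fun k => Subalgebra.mem_map.1 (f k).2
  have hli : LinearIndependent K fun k => φ.mapMatrix (C k) := by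
    simp only [hC]
    exact hf.map' (Subalgebra.val _).toLinearMap (LinearMap.ker_eq_bot.2 Subtype.val_injective)
  have hcard := card_le_of_linearIndependent_of_commute hA
    (fun k => ((Subalgebra.mem_centralizer_iff K).1 (hCA k) A rfl).symm)
    (linearIndependent_of_matrix_map (φ := φ.toRingHom) hφ hli)
  simp at hcard

end Specialization

section CommutingVariety

/-- The left matrix of the generic pair of `ι × ι` matrices, with entries the variables indexed by
the left copy of `ι × ι`. -/
noncomputable def genericLeft (R ι : Type*) [CommSemiring R] :
    Matrix ι ι (MvPolynomial ((ι × ι) ⊕ (ι × ι)) R) :=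
  .of fun i j => MvPolynomial.X (.inl (i, j))

/-- The right matrix of the generic pair of `ι × ι` matrices, with entries the variables indexed by
the right copy of `ι × ι`. -/
noncomputable def genericRight (R ι : Type*) [CommSemiring R] :
    Matrix ι ι (MvPolynomial ((ι × ι) ⊕ (ι × ι)) R) :=
  .of fun i j => MvPolynomial.X (.inr (i, j))

/-- The ideal of the scheme of commuting pairs of `ι × ι` matrices, generated by the entries of the
commutator of the generic pair. -/
noncomputable def commutatorIdeal (R ι : Type*) [CommRing R] [Fintype ι] :
    Ideal (MvPolynomial ((ι × ι) ⊕ (ι × ι)) R) :=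
  .span {p | ∃ i j,
    p = (genericLeft R ι * genericRight R ι - genericRight R ι * genericLeft R ι) i j}

/-- The coordinate ring of the (reduced) variety of commuting pairs of `ι × ι` matrices. -/
abbrev CommutingPairsRing (R ι : Type*) [CommRing R] [Fintype ι] : Type _ :=
  MvPolynomial ((ι × ι) ⊕ (ι × ι)) R ⧸ (commutatorIdeal R ι).radical

variable (R ι : Type*) [CommRing R] [Fintype ι]

/-- The left matrix of the generic commuting pair, over the coordinate ring of the variety. -/
noncomputable def genericCommutingLeft : Matrix ι ι (CommutingPairsRing R ι) :=
  (genericLeft R ι).map (Ideal.Quotient.mk _)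

/-- The right matrix of the generic commuting pair, over the coordinate ring of the variety. -/
noncomputable def genericCommutingRight : Matrix ι ι (CommutingPairsRing R ι) :=
  (genericRight R ι).map (Ideal.Quotient.mk _)

theorem commute_genericCommuting :
    Commute (genericCommutingLeft R ι) (genericCommutingRight R ι) := by
  rw [Commute, SemiconjBy, ← sub_eq_zero, genericCommutingLeft, genericCommutingRight,
    ← Matrix.map_mul, ← Matrix.map_mul, ← Matrix.map_sub _ (map_sub _)]
  ext i j
  exact Ideal.Quotient.eq_zero_iff_mem.2 (Ideal.le_radical (Ideal.subset_span ⟨i, j, rfl⟩))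

variable {R ι}

theorem exists_specialization_of_commute [DecidableEq ι] {T : Type*} [CommRing T] [IsReduced T]
    [Algebra R T] {A B : Matrix ι ι T} (h : Commute A B) :
    ∃ φ : CommutingPairsRing R ι →ₐ[R] T,
      φ.mapMatrix (genericCommutingLeft R ι) = A ∧
      φ.mapMatrix (genericCommutingRight R ι) = B := by
  let ev : MvPolynomial ((ι × ι) ⊕ (ι × ι)) R →ₐ[R] T :=
    MvPolynomial.aeval (Sum.elim (fun p => A p.1 p.2) (fun p => B p.1 p.2))
  have hA : ev.mapMatrix (genericLeft R ι) = A := by ext i j; simp [ev, genericLeft]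
  have hB : ev.mapMatrix (genericRight R ι) = B := by ext i j; simp [ev, genericRight]
  have hker : (commutatorIdeal R ι).radical ≤ RingHom.ker ev := by
    refine (Ideal.isRadical_bot.comap ev).radical_le_iff.2 (Ideal.span_le.2 ?_)
    rintro _ ⟨i, j, rfl⟩
    have hcomm : ev.mapMatrix (genericLeft R ι * genericRight R ι -
        genericRight R ι * genericLeft R ι) = 0 := by
      rw [map_sub, map_mul, map_mul, hA, hB, h.eq, sub_self]
    exact congrFun (congrFun hcomm i) j
  exact ⟨Ideal.Quotient.liftₐ _ ev hker, hA, hB⟩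

theorem exists_nonsingular_krylovMatrix_genericCommutingLeft (R : Type*) [CommRing R] [IsReduced R]
    (n : ℕ) [IsDomain (CommutingPairsRing R (Fin n))] :
    ∃ v, (krylovMatrix (genericCommutingLeft R (Fin n)) v).Nonsingular := by
  have : Nontrivial R := (algebraMap R (CommutingPairsRing R (Fin n))).domain_nontrivial
  obtain ⟨N, v, hN⟩ := exists_krylovMatrix_eq_one R n
  obtain ⟨φ, hφ, -⟩ := exists_specialization_of_commute (R := R) (Commute.zero_right N)
  let v' : Fin n → CommutingPairsRing R (Fin n) := algebraMap R _ ∘ v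
  have hv : φ ∘ v' = v := funext fun i => φ.commutes (v i)
  have hmap : (krylovMatrix (genericCommutingLeft R (Fin n)) v').map φ.toRingHom = 1 :=
    calc _ = krylovMatrix (φ.mapMatrix (genericCommutingLeft R (Fin n))) (φ ∘ v') :=
          (krylovMatrix_map φ.toRingHom _ v').symm
      _ = 1 := by rw [hφ, hv, hN]
  exact ⟨v', nonsingular_of_nonsingular_map φ.toRingHom (hmap ▸ Matrix.nonsingular_one)⟩

end CommutingVariety

theorem dim_le_of_commuting_pairs_variety_irreducible_general {F : Type*} [Field F] {n : ℕ}
    (hprime : (commutatorIdeal F (Fin n)).radical.IsPrime) {A B : Matrix (Fin n) (Fin n) F}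
    (hAB : A * B = B * A) : Module.finrank F (Algebra.adjoin F {A, B}) ≤ n := by
  obtain ⟨φ, rfl, rfl⟩ := exists_specialization_of_commute (R := F) hAB
  obtain ⟨v, hv⟩ := exists_nonsingular_krylovMatrix_genericCommutingLeft F n
  rw [← Set.image_pair, ← AlgHom.map_adjoin]
  have hle : Algebra.adjoin F {genericCommutingLeft F (Fin n), genericCommutingRight F (Fin n)} ≤
      Subalgebra.centralizer F {genericCommutingLeft F (Fin n)} := by
    simpa [Algebra.adjoin_le_iff, Set.pair_subset_iff, Set.mem_centralizer_iff] using
      (commute_genericCommuting F (Fin n)).eq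
  calc _ ≤ Module.finrank F
        ((Subalgebra.centralizer F {genericCommutingLeft F (Fin n)}).map φ.mapMatrix) :=
        Submodule.finrank_mono (Subalgebra.toSubmodule.monotone (Subalgebra.map_mono hle))
    _ ≤ n := finrank_map_centralizer_le φ hv

/-- Guralnick's derivation of Gerstenhaber's theorem from Motzkin–Taussky: if the variety
`C(2,n)` of commuting pairs of `n × n` matrices over an algebraically closed field `F` is
irreducible (the radical of the commutator-entries ideal is prime), then every commuting
pair of `n × n` matrices over `F` generates a subalgebra of dimension at most `n`. -/
theorem dim_le_of_commuting_pairs_variety_irreducible (F : Type*) [Field F]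
    [IsAlgClosed F] (n : ℕ) (hn : 1 ≤ n)
    (X Y : Matrix (Fin n) (Fin n) (MvPolynomial ((Fin n × Fin n) ⊕ (Fin n × Fin n)) F))
    (hX : ∀ i j, X i j = MvPolynomial.X (Sum.inl (i, j)))
    (hY : ∀ i j, Y i j = MvPolynomial.X (Sum.inr (i, j)))
    (I : Ideal (MvPolynomial ((Fin n × Fin n) ⊕ (Fin n × Fin n)) F))
    (hI : I = Ideal.span {p | ∃ i j, p = (X * Y - Y * X) i j})
    (hprime : I.radical.IsPrime) :
    ∀ A B : Matrix (Fin n) (Fin n) F,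
      A * B = B * A →
      Module.finrank F ↥(Algebra.adjoin F {A, B}) ≤ n := by
  obtain ⟨rfl, rfl⟩ : X = genericLeft F (Fin n) ∧ Y = genericRight F (Fin n) :=
    ⟨Matrix.ext hX, Matrix.ext hY⟩
  subst hI
  exact fun A B => dim_le_of_commuting_pairs_variety_irreducible_general hprime
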